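/- The function h₁(x) = 4x + √π·e^{x²}·(1−2x²)·(1−erf(x)) satisfies, for every real x, the equation h₁''(x) − 2(x + 4x/(1+2x²))·h₁'(x) + 2·h₁(x) = 0, and the function h₂(x) = 2 + 4x² + 4√π·x·e^{x²}·(1−erf(x)) satisfies, for every real x, the equation h₂''(x) − 2(x + 4x/(1+2x²))·h₂'(x) + 4·h₂(x) = 0; i.e., h₁ and h₂ are (non-polynomial) solutions of the X₂^{(1)}-Hermite differential equation with parameters n = 1 and n = 2 respectively. -/

import Mathlib

/-- The error function. -/
noncomputable def erf (x : ℝ) : ℝ :=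
  (2 / Real.sqrt Real.pi) * ∫ t in (0 : ℝ)..x, Real.exp (-t ^ 2)

/-- The non-polynomial solution Ĥ₁. -/
noncomputable def h1 (x : ℝ) : ℝ :=
  4 * x + Real.sqrt Real.pi * Real.exp (x ^ 2) * (1 - 2 * x ^ 2) * (1 - erf x)

/-- The non-polynomial solution Ĥ₂. -/
noncomputable def h2 (x : ℝ) : ℝ :=
  2 + 4 * x ^ 2 + 4 * Real.sqrt Real.pi * x * Real.exp (x ^ 2) * (1 - erf x)

/-!
Both solutions are polynomial combinations of `g x = √π e^{x²} (1 - erf x)`, which satisfies the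
first-order linear equation `g' = 2xg - 2`. Moreover `1 + 2x²`, the denominator in the Hermite
equation, divides both derivatives: `h₁' = (1 + 2x²)(2 - 2xg)` and `h₂' = (1 + 2x²) · 4g`. The
denominator therefore cancels, and what remains is a polynomial identity in `x` and `g`.
-/

open Real

section X2Hermite

variable {𝕜 : Type*} [NontriviallyNormedField 𝕜]

/-- The `X₂^{(1)}`-Hermite differential equation with parameter `n` for the function `ω`, at the
point `z`. It carries its intended meaning only where `1 + 2 * z ^ 2 ≠ 0` and `ω` is twice
differentiable. -/
def X2HermiteEq (n : 𝕜) (ω : 𝕜 → 𝕜) (z : 𝕜) : Prop :=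
  deriv (deriv ω) z - 2 * (z + 4 * z / (1 + 2 * z ^ 2)) * deriv ω z + 2 * n * ω z = 0

theorem x2HermiteEq_iff_of_hasDerivAt {n z φ' : 𝕜} {ω φ : 𝕜 → 𝕜}
    (hω : ∀ w, HasDerivAt ω ((1 + 2 * w ^ 2) * φ w) w) (hφ : HasDerivAt φ φ' z)
    (hz : 1 + 2 * z ^ 2 ≠ 0) :
    X2HermiteEq n ω z ↔
      (1 + 2 * z ^ 2) * (φ' - 2 * z * φ z) - 4 * z * φ z + 2 * n * ω z = 0 := by
  have deriv_ω : deriv ω = fun w => (1 + 2 * w ^ 2) * φ w := funext fun w => (hω w).deriv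
  have deriv_deriv_ω : deriv (deriv ω) z = 4 * z * φ z + (1 + 2 * z ^ 2) * φ' := by
    rw [deriv_ω]
    refine (((((hasDerivAt_pow 2 z).const_mul 2).const_add 1).fun_mul hφ).congr_deriv ?_).deriv
    push_cast
    ring
  have cancel : 4 * z / (1 + 2 * z ^ 2) * ((1 + 2 * z ^ 2) * φ z) = 4 * z * φ z := by
    rw [← mul_assoc, div_mul_cancel₀ _ hz]
  rw [X2HermiteEq, deriv_deriv_ω, deriv_ω]
  refine Eq.congr_left ?_
  linear_combination -2 * cancel

variable {g : 𝕜 → 𝕜} {c z : 𝕜}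

theorem hasDerivAt_x2Hermite_one (hg : HasDerivAt g (2 * z * g z - c) z) :
    HasDerivAt (fun w => 2 * c * w + (1 - 2 * w ^ 2) * g w)
      ((1 + 2 * z ^ 2) * (c - 2 * (z * g z))) z := by
  refine (((hasDerivAt_id' z).const_mul (2 * c)).fun_add
    ((((hasDerivAt_pow 2 z).const_mul 2).const_sub 1).fun_mul hg)).congr_deriv ?_
  push_cast
  ring

theorem hasDerivAt_x2Hermite_two (hg : HasDerivAt g (2 * z * g z - c) z) :
    HasDerivAt (fun w => c * (1 + 2 * w ^ 2) + 4 * (w * g w))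
      ((1 + 2 * z ^ 2) * (4 * g z)) z := by
  refine (((((hasDerivAt_pow 2 z).const_mul 2).const_add 1).const_mul c).fun_add
    (((hasDerivAt_id' z).fun_mul hg).const_mul 4)).congr_deriv ?_
  push_cast
  ring

theorem x2HermiteEq_one (hg : ∀ w, HasDerivAt g (2 * w * g w - c) w) (hz : 1 + 2 * z ^ 2 ≠ 0) :
    X2HermiteEq 1 (fun w => 2 * c * w + (1 - 2 * w ^ 2) * g w) z := by
  have cofactor := (((hasDerivAt_id' z).fun_mul (hg z)).const_mul 2).const_sub c
  rw [x2HermiteEq_iff_of_hasDerivAt (fun w => hasDerivAt_x2Hermite_one (hg w)) cofactor hz]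
  ring

theorem x2HermiteEq_two (hg : ∀ w, HasDerivAt g (2 * w * g w - c) w) (hz : 1 + 2 * z ^ 2 ≠ 0) :
    X2HermiteEq 2 (fun w => c * (1 + 2 * w ^ 2) + 4 * (w * g w)) z := by
  have cofactor := (hg z).const_mul 4
  rw [x2HermiteEq_iff_of_hasDerivAt (fun w => hasDerivAt_x2Hermite_two (hg w)) cofactor hz]
  ring

end X2Hermite

theorem hasDerivAt_erf (x : ℝ) : HasDerivAt erf (2 / √π * exp (-x ^ 2)) x := by
  have continuous_gaussian : Continuous fun t : ℝ => exp (-t ^ 2) := by fun_prop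
  exact (continuous_gaussian.integral_hasStrictDerivAt 0 x).hasDerivAt.const_mul _

/-- The scaled complementary error function `e^{x²} (1 - erf x)`, multiplied by `√π` so that its
differential equation `g' = 2xg - 2` has rational coefficients. -/
noncomputable def scaledErfc (x : ℝ) : ℝ :=
  √π * exp (x ^ 2) * (1 - erf x)

theorem hasDerivAt_scaledErfc (x : ℝ) :
    HasDerivAt scaledErfc (2 * x * scaledErfc x - 2) x := by
  have gaussian_cancel : √π * exp (x ^ 2) * (2 / √π * exp (-x ^ 2)) = 2 := by
    rw [exp_neg]
    field_simp
  refine (((hasDerivAt_pow 2 x).exp.const_mul √π).fun_mul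
    ((hasDerivAt_erf x).const_sub 1)).congr_deriv ?_
  rw [scaledErfc]
  push_cast
  linear_combination -gaussian_cancel

theorem h1_eq_scaledErfc :
    h1 = fun x => 2 * 2 * x + (1 - 2 * x ^ 2) * scaledErfc x := by
  funext x
  rw [h1, scaledErfc]
  ring

theorem h2_eq_scaledErfc :
    h2 = fun x => 2 * (1 + 2 * x ^ 2) + 4 * (x * scaledErfc x) := by
  funext x
  rw [h2, scaledErfc]
  ring

theorem x2HermiteEq_h1 (x : ℝ) : X2HermiteEq 1 h1 x :=
  h1_eq_scaledErfc ▸ x2HermiteEq_one hasDerivAt_scaledErfc (by positivity)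

theorem x2HermiteEq_h2 (x : ℝ) : X2HermiteEq 2 h2 x :=
  h2_eq_scaledErfc ▸ x2HermiteEq_two hasDerivAt_scaledErfc (by positivity)

theorem stmt4 :
    (∀ x : ℝ,
      deriv (deriv h1) x - 2 * (x + 4 * x / (1 + 2 * x ^ 2)) * deriv h1 x + 2 * h1 x = 0) ∧
    (∀ x : ℝ,
      deriv (deriv h2) x - 2 * (x + 4 * x / (1 + 2 * x ^ 2)) * deriv h2 x + 4 * h2 x = 0) := by
  refine ⟨fun x => ?_, fun x => ?_⟩
  · have equation := x2HermiteEq_h1 x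
    rwa [X2HermiteEq, mul_one] at equation
  · have equation := x2HermiteEq_h2 x
    rwa [X2HermiteEq, show (2 : ℝ) * 2 = 4 by norm_num] at equation
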